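/- arXiv:2309.15042 — 2 statements merged into one kernel-verified Lean document; each statement's English description precedes it below -/
import Mathlib

section
/- Fix 0 < p < 1. The set {f ∈ V_p : for every q > 0, sup_{0<r<1} (1/(2π)) ∫_{−π}^{π} |Im f(r e^{iθ})|^q dθ = ∞} — i.e., the set of u ∈ h^p whose normalized harmonic conjugate ũ belongs to no h^q with q > 0 — is a G_δ and dense subset of the metric space (V_p, δ_p). -/
open Complex Set Metric

noncomputable section

/-- `N_p`-mean of a real function on the circle of radius `r`:
`(1/2π) ∫_{-π}^{π} |u(r e^{iθ})|^p dθ`. -/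
def circMeanR (p : ℝ) (u : ℂ → ℝ) (r : ℝ) : ℝ :=
  (1 / (2 * Real.pi)) * ∫ θ in (-Real.pi)..Real.pi,
    |u ((r : ℂ) * Complex.exp ((θ : ℂ) * Complex.I))| ^ p

/-- The space `h^p` (for a fixed `p`), identified with the holomorphic functions
`f = u + i ũ` with `Im f(0) = 0` and `Re f ∈ h^p`. -/
def HarmVp (p : ℝ) : Type :=
  {f : ℂ → ℂ // DifferentiableOn ℂ f (Metric.ball (0 : ℂ) 1) ∧ (f 0).im = 0 ∧
    ∃ C : ℝ, ∀ r ∈ Set.Ioo (0 : ℝ) 1, circMeanR p (fun z => (f z).re) r ≤ C}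

/-- The translation-invariant metric `δ_p(f,g) = N_p(Re(f-g))` on `h^p`. -/
def harmDistP (p : ℝ) (f g : HarmVp p) : ℝ :=
  ⨆ r : Set.Ioo (0 : ℝ) 1, circMeanR p (fun z => (f.1 z - g.1 z).re) r

/-- The topology induced by a distance function via its open balls. -/
def ballTopology {α : Type*} (d : α → α → ℝ) : TopologicalSpace α :=
  TopologicalSpace.generateFrom {U | ∃ x ε, 0 < ε ∧ U = {y | d x y < ε}}


/-! ### Basic facts on circle averages -/

lemma circMeanR_eq (p : ℝ) (u : ℂ → ℝ) (r : ℝ) :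
    circMeanR p u r = Real.circleAverage (fun z => |u z| ^ p) 0 r := by
  rw [Real.circleAverage_def, circMeanR, smul_eq_mul, one_div]
  congr 1
  have hper : Function.Periodic (fun θ : ℝ => |u (circleMap 0 r θ)| ^ p) (2 * Real.pi) :=
    fun x => by simp [periodic_circleMap (0 : ℂ) r x]
  have h := hper.intervalIntegral_add_eq 0 (-Real.pi)
  rw [zero_add, show -Real.pi + 2 * Real.pi = Real.pi by ring] at h
  rw [h]
  simp [circleMap]

lemma cont_abs_rpow {p : ℝ} (hp : 0 < p) : Continuous (fun x : ℝ => |x| ^ p) :=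
  (continuous_abs).rpow_const (fun _ => Or.inr hp.le)

lemma cont_norm_rpow {p : ℝ} (hp : 0 < p) : Continuous (fun x : ℂ => ‖x‖ ^ p) :=
  (continuous_norm).rpow_const (fun _ => Or.inr hp.le)

lemma sphere_sub_ball {r : ℝ} (hr0 : 0 < r) (hr1 : r < 1) :
    sphere (0 : ℂ) |r| ⊆ ball (0 : ℂ) 1 := by
  intro z hz
  rw [abs_of_pos hr0] at hz
  simp at hz ⊢
  linarith

lemma ci_of_cont {E : Type*} [NormedAddCommGroup E] {F : ℂ → E} {r : ℝ}
    (hr0 : 0 < r) (hr1 : r < 1) (hF : ContinuousOn F (ball (0 : ℂ) 1)) :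
    CircleIntegrable F 0 r :=
  (hF.mono (sphere_sub_ball hr0 hr1)).circleIntegrable'

lemma norm_circleAverage_le {F : ℂ → ℂ} {r : ℝ} :
    ‖Real.circleAverage F 0 r‖ ≤ Real.circleAverage (fun z => ‖F z‖) 0 r := by
  rw [Real.circleAverage_def, Real.circleAverage_def, norm_smul, smul_eq_mul, Real.norm_eq_abs,
    abs_of_pos (inv_pos.2 Real.two_pi_pos)]
  gcongr
  exact intervalIntegral.norm_integral_le_integral_norm Real.two_pi_pos.le

lemma diffContOnCl_of {f : ℂ → ℂ} (hf : DifferentiableOn ℂ f (ball (0 : ℂ) 1)) {s : ℝ}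
    (hs0 : 0 < s) (hs1 : s < 1) : DiffContOnCl ℂ f (ball 0 |s|) := by
  apply DifferentiableOn.diffContOnCl
  rw [abs_of_pos hs0]
  refine hf.mono ?_
  rw [closure_ball _ hs0.ne']
  exact closedBall_subset_ball hs1

lemma conj_circleAverage {F : ℂ → ℂ} {r : ℝ} (hF : CircleIntegrable F 0 r) :
    Real.circleAverage (fun z => (starRingEnd ℂ) (F z)) 0 r =
      (starRingEnd ℂ) (Real.circleAverage F 0 r) := by
  exact (Complex.conjCLE : ℂ →L[ℝ] ℂ).circleAverage_comp_comm hF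

/-- Bound of a holomorphic function by the mean of its real part. -/
lemma schwarz_bound {f : ℂ → ℂ} (hf : DifferentiableOn ℂ f (ball (0 : ℂ) 1))
    (h0 : (f 0).im = 0) {s : ℝ} (hs0 : 0 < s) (hs1 : s < 1) {z : ℂ} (hz : ‖z‖ < s) :
    ‖f z‖ ≤ 3 / (s - ‖z‖) * Real.circleAverage (fun w => |(f w).re|) 0 s := by
  have hd := diffContOnCl_of hf hs0 hs1
  have hzb : z ∈ ball (0 : ℂ) |s| := by simpa [abs_of_pos hs0] using hz
  have hcf : ContinuousOn f (sphere (0 : ℂ) |s|) :=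
    hf.continuousOn.mono (sphere_sub_ball hs0 hs1)
  have hne : ∀ w ∈ sphere (0 : ℂ) |s|, w - z ≠ 0 := by
    intro w hw h
    rw [abs_of_pos hs0] at hw
    simp at hw
    rw [sub_eq_zero] at h
    subst h; linarith
  have hk : ContinuousOn (fun w : ℂ => w / (w - z)) (sphere (0 : ℂ) |s|) :=
    continuousOn_id.div (continuousOn_id.sub continuousOn_const) hne
  -- Cauchy formula
  have e1 : Real.circleAverage (fun w => (w / (w - z)) * f w) 0 s = f z := by
    simpa using hd.circleAverage_smul_div hzb
  -- conjugate part
  have hne2 : ∀ w ∈ closedBall (0 : ℂ) |s|, (s : ℂ) ^ 2 - (starRingEnd ℂ) z * w ≠ 0 := by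
    intro w hw h
    rw [abs_of_pos hs0] at hw
    simp at hw
    rw [sub_eq_zero] at h
    have := congrArg norm h
    simp [abs_of_pos hs0] at this
    nlinarith [norm_nonneg z, norm_nonneg w]
  have hd2 : DiffContOnCl ℂ (fun w => (s : ℂ) ^ 2 / ((s : ℂ) ^ 2 - (starRingEnd ℂ) z * w) * f w)
      (ball 0 |s|) := by
    apply DifferentiableOn.diffContOnCl
    have hs' : |s| ≠ 0 := by positivity
    rw [closure_ball _ hs']
    apply DifferentiableOn.mul
    · apply DifferentiableOn.div (by fun_prop) (by fun_prop) hne2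
    · rw [abs_of_pos hs0]
      exact hf.mono (closedBall_subset_ball hs1)
  have e2 : Real.circleAverage (fun w => (s : ℂ) ^ 2 / ((s : ℂ) ^ 2 - (starRingEnd ℂ) z * w) * f w)
      0 s = f 0 := by
    rw [hd2.circleAverage]
    have : (s : ℂ) ≠ 0 := by exact_mod_cast hs0.ne'
    simp [this]
  have hci2 : CircleIntegrable
      (fun w => (s : ℂ) ^ 2 / ((s : ℂ) ^ 2 - (starRingEnd ℂ) z * w) * f w) 0 s := by
    apply ContinuousOn.circleIntegrable'
    refine ContinuousOn.mul ?_ hcf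
    exact ContinuousOn.div (by fun_prop) (by fun_prop)
      (fun w hw => hne2 w (sphere_subset_closedBall hw))
  have e3 := conj_circleAverage hci2
  rw [e2] at e3
  have hci1 : CircleIntegrable (fun w => (w / (w - z)) * f w) 0 s :=
    (hk.mul hcf).circleIntegrable'
  have hci3 : CircleIntegrable (fun w => (starRingEnd ℂ)
      ((s : ℂ) ^ 2 / ((s : ℂ) ^ 2 - (starRingEnd ℂ) z * w) * f w)) 0 s := by
    apply ContinuousOn.circleIntegrable'
    refine Complex.continuous_conj.comp_continuousOn (ContinuousOn.mul ?_ hcf)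
    exact ContinuousOn.div (by fun_prop) (by fun_prop)
      (fun w hw => hne2 w (sphere_subset_closedBall hw))
  have e4 : Real.circleAverage (fun w => (w / (w - z)) * (2 * ((f w).re : ℂ))) 0 s
      = f z + (starRingEnd ℂ) (f 0) := by
    rw [← e1, ← e3, ← Real.circleAverage_fun_add hci1 hci3]
    apply Real.circleAverage_congr_sphere
    intro w hw
    have hw1 := hne w hw
    have hw2 := hne2 w (sphere_subset_closedBall hw)
    have hws : w * (starRingEnd ℂ) w = (s : ℂ) ^ 2 := by
      rw [abs_of_pos hs0] at hw
      simp at hw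
      rw [Complex.mul_conj, Complex.normSq_eq_norm_sq, hw]; norm_cast
    have hw3 : (s : ℂ) ^ 2 - z * (starRingEnd ℂ) w ≠ 0 := by
      intro h
      apply hw2
      have := congrArg (starRingEnd ℂ) h
      simpa using this
    have hkey : w / (w - z) = (s : ℂ) ^ 2 / ((s : ℂ) ^ 2 - z * (starRingEnd ℂ) w) := by
      rw [div_eq_div_iff hw1 hw3, ← hws]; ring
    simp only [map_mul, map_div₀, map_sub, map_pow, Complex.conj_ofReal, Complex.conj_conj]
    rw [← hkey, ← mul_add, Complex.add_conj]
    push_cast; ring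
  have hu : ContinuousOn (fun w => |(f w).re|) (sphere (0 : ℂ) |s|) :=
    (Complex.continuous_re.comp_continuousOn hcf).abs
  have hd0 : 0 < s - ‖z‖ := by linarith
  have b1 : ‖f z + (starRingEnd ℂ) (f 0)‖ ≤
      (2 / (s - ‖z‖)) * Real.circleAverage (fun w => |(f w).re|) 0 s := by
    rw [← e4, ← smul_eq_mul, ← Real.circleAverage_fun_smul]
    refine norm_circleAverage_le.trans (Real.circleAverage_mono ?_ ?_ ?_)
    · apply ContinuousOn.circleIntegrable'
      refine (hk.mul (continuousOn_const.mul ?_)).norm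
      exact Complex.continuous_ofReal.comp_continuousOn (Complex.continuous_re.comp_continuousOn hcf)
    · exact (hu.const_smul (2 / (s - ‖z‖))).circleIntegrable'
    · intro w hw
      rw [abs_of_pos hs0] at hw
      simp at hw
      have h3 : s - ‖z‖ ≤ ‖w - z‖ := by rw [← hw]; exact norm_sub_norm_le w z
      simp only [norm_mul, norm_div, hw, smul_eq_mul, Complex.norm_real, Real.norm_eq_abs]
      have : s / ‖w - z‖ ≤ 1 / (s - ‖z‖) := by gcongr
      calc s / ‖w - z‖ * (‖(2 : ℂ)‖ * |(f w).re|) ≤ 1 / (s - ‖z‖) * (‖(2 : ℂ)‖ * |(f w).re|) := by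
            gcongr
        _ = _ := by simp; ring
  have b2 : ‖(starRingEnd ℂ) (f 0)‖ ≤ Real.circleAverage (fun w => |(f w).re|) 0 s := by
    have h1 : f 0 = ((f 0).re : ℂ) := by
      apply Complex.ext <;> simp [h0]
    rw [RCLike.norm_conj, h1, Complex.norm_real, Real.norm_eq_abs]
    have h2 : Real.circleAverage (fun w => (f w).re) 0 s = (f 0).re := by
      rw [← hd.circleAverage]
      exact Complex.reCLM.circleAverage_comp_comm hcf.circleIntegrable'
    rw [← h2]
    exact Real.abs_circleAverage_le_circleAverage_abs
  have b3 : 0 ≤ Real.circleAverage (fun w => |(f w).re|) 0 s := (norm_nonneg _).trans b2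
  have b4 : 1 ≤ 1 / (s - ‖z‖) := by
    rw [le_div_iff₀ hd0]; linarith [norm_nonneg z]
  calc ‖f z‖ = ‖(f z + (starRingEnd ℂ) (f 0)) - (starRingEnd ℂ) (f 0)‖ := by ring_nf
    _ ≤ _ := norm_sub_le _ _
    _ ≤ (2 / (s - ‖z‖)) * Real.circleAverage (fun w => |(f w).re|) 0 s
        + 1 / (s - ‖z‖) * Real.circleAverage (fun w => |(f w).re|) 0 s := by
          refine add_le_add b1 (b2.trans ?_)
          exact le_mul_of_one_le_left b3 b4
    _ = _ := by ring

/-- Hardy–Littlewood type estimate: for `0 < p < 1` the `p`-means of `Re f` control `f` locally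
uniformly. -/
lemma hardy_littlewood {f : ℂ → ℂ} (hf : DifferentiableOn ℂ f (ball (0 : ℂ) 1))
    (h0 : (f 0).im = 0) {p : ℝ} (hp0 : 0 < p) (hp1 : p < 1) {N : ℝ}
    (hN : ∀ s, 0 < s → s < 1 → Real.circleAverage (fun w => |(f w).re| ^ p) 0 s ≤ N)
    {R : ℝ} (hR0 : 0 < R) (hR1 : R < 1) {z : ℂ} (hz : ‖z‖ ≤ R) :
    (R - ‖z‖) * ‖f z‖ ^ p ≤ 6 * 2 ^ ((1 - p) / p) * N := by
  have hN0 : 0 ≤ N := by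
    refine le_trans ?_ (hN (1 / 2) (by norm_num) (by norm_num))
    exact Real.circleAverage_nonneg_of_nonneg (fun x _ => by positivity)
  have hcf : ContinuousOn f (closedBall (0 : ℂ) R) :=
    hf.continuousOn.mono (closedBall_subset_ball hR1)
  have hφ : ContinuousOn (fun z : ℂ => (R - ‖z‖) * ‖f z‖ ^ p) (closedBall (0 : ℂ) R) :=
    (by fun_prop : ContinuousOn (fun z : ℂ => R - ‖z‖) _).mul
      ((cont_norm_rpow hp0).comp_continuousOn hcf)
  obtain ⟨z0, hz0, hmax⟩ := (isCompact_closedBall (0 : ℂ) R).exists_isMaxOn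
    ⟨0, by simp [hR0.le]⟩ hφ
  have hmax' : ∀ w : ℂ, ‖w‖ ≤ R → (R - ‖w‖) * ‖f w‖ ^ p ≤ (R - ‖z0‖) * ‖f z0‖ ^ p :=
    fun w hw => hmax (by simpa using hw)
  refine (hmax' z hz).trans ?_
  have hz0' : ‖z0‖ ≤ R := by simpa using hz0
  rcases hz0'.eq_or_lt with hd | hd
  · rw [hd, sub_self, zero_mul]; positivity
  rcases (norm_nonneg (f z0)).eq_or_lt with hX | hX
  · rw [← hX, Real.zero_rpow hp0.ne', mul_zero]; positivity
  set d := R - ‖z0‖ with hd'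
  set X := ‖f z0‖ with hX'
  have hdpos : 0 < d := by linarith
  set s := (‖z0‖ + R) / 2 with hs
  have hs0 : 0 < s := by have := norm_nonneg z0; linarith
  have hs1 : s < 1 := by linarith
  have hzs : ‖z0‖ < s := by linarith
  have key := schwarz_bound hf h0 hs0 hs1 hzs
  have hsd : s - ‖z0‖ = d / 2 := by rw [hs, hd']; ring
  rw [hsd] at key
  set Q : ℝ := 2 ^ ((1 - p) / p) * X ^ (1 - p) with hQ
  have hQ0 : 0 < Q := by positivity
  have hcs : ContinuousOn (fun w => (f w).re) (sphere (0 : ℂ) |s|) :=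
    Complex.continuous_re.comp_continuousOn (hf.continuousOn.mono (sphere_sub_ball hs0 hs1))
  have hav : Real.circleAverage (fun w => |(f w).re|) 0 s ≤ Q * N := by
    calc Real.circleAverage (fun w => |(f w).re|) 0 s
        ≤ Real.circleAverage (fun w => Q • |(f w).re| ^ p) 0 s := by
          refine Real.circleAverage_mono hcs.abs.circleIntegrable' ?_ ?_
          · exact (((cont_abs_rpow hp0).comp_continuousOn hcs).const_smul Q).circleIntegrable'
          · intro w hw
            rw [abs_of_pos hs0] at hw
            have hw' : ‖w‖ = s := by simpa using hw
            have h1 := hmax' w (by linarith)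
            have h2 : R - ‖w‖ = d / 2 := by rw [hw', hs, hd']; ring
            rw [h2] at h1
            have h3 : ‖f w‖ ^ p ≤ 2 * X ^ p := by
              have : d * (‖f w‖ ^ p) ≤ d * (2 * X ^ p) := by linarith
              exact le_of_mul_le_mul_left this hdpos
            have h4 : |(f w).re| ≤ ‖f w‖ := Complex.abs_re_le_norm _
            have h5 : |(f w).re| ^ (1 - p) ≤ Q := by
              calc |(f w).re| ^ (1 - p) ≤ ‖f w‖ ^ (1 - p) :=
                    Real.rpow_le_rpow (abs_nonneg _) h4 (by linarith)
                _ = (‖f w‖ ^ p) ^ ((1 - p) / p) := by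
                    rw [← Real.rpow_mul (norm_nonneg _)]; congr 1; field_simp
                _ ≤ (2 * X ^ p) ^ ((1 - p) / p) :=
                    Real.rpow_le_rpow (by positivity) h3 (div_nonneg (by linarith) hp0.le)
                _ = Q := by
                    rw [Real.mul_rpow (by norm_num) (by positivity), ← Real.rpow_mul hX.le, hQ]
                    congr 2; field_simp
            rcases (abs_nonneg (f w).re).eq_or_lt with h6 | h6
            · rw [← h6]; simp only [smul_eq_mul]; positivity
            · calc |(f w).re| = |(f w).re| ^ (1 - p) * |(f w).re| ^ p := by
                    rw [← Real.rpow_add h6]; simp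
                _ ≤ Q • |(f w).re| ^ p := by
                    rw [smul_eq_mul]; gcongr
      _ = Q * Real.circleAverage (fun w => |(f w).re| ^ p) 0 s := by
          rw [Real.circleAverage_fun_smul, smul_eq_mul]
      _ ≤ Q * N := by gcongr; exact hN s hs0 hs1
  have h7 : X ≤ 3 / (d / 2) * (Q * N) := key.trans (by gcongr)
  have h8 : X = X ^ p * X ^ (1 - p) := by rw [← Real.rpow_add hX]; simp
  have h9 : 0 < X ^ (1 - p) := by positivity
  have h10 : d * X ^ p * X ^ (1 - p) ≤ 6 * 2 ^ ((1 - p) / p) * N * X ^ (1 - p) := by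
    calc d * X ^ p * X ^ (1 - p) = d * X := by rw [mul_assoc, ← h8]
      _ ≤ d * (3 / (d / 2) * (Q * N)) := by gcongr
      _ = _ := by rw [hQ]; field_simp; ring
  exact le_of_mul_le_mul_right h10 h9

lemma ci_abs_rpow {q : ℝ} (hq : 0 < q) {u : ℂ → ℝ} (hu : ContinuousOn u (ball (0 : ℂ) 1))
    {r : ℝ} (hr : r ∈ Ioo (0 : ℝ) 1) : CircleIntegrable (fun z => |u z| ^ q) 0 r :=
  ci_of_cont hr.1 hr.2 ((cont_abs_rpow hq).comp_continuousOn hu)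

lemma circMeanR_nonneg (q : ℝ) (u : ℂ → ℝ) (r : ℝ) : 0 ≤ circMeanR q u r := by
  rw [circMeanR_eq]
  exact Real.circleAverage_nonneg_of_nonneg (fun x _ => by positivity)

lemma circMeanR_le_add {q : ℝ} (hq : 0 < q) (hq1 : q ≤ 1) {u v w : ℂ → ℝ}
    (hu : ContinuousOn u (ball (0 : ℂ) 1)) (hv : ContinuousOn v (ball (0 : ℂ) 1))
    (hw : ContinuousOn w (ball (0 : ℂ) 1)) {r : ℝ} (hr : r ∈ Ioo (0 : ℝ) 1)
    (h : ∀ z ∈ sphere (0 : ℂ) r, |u z| ≤ |v z| + |w z|) :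
    circMeanR q u r ≤ circMeanR q v r + circMeanR q w r := by
  simp only [circMeanR_eq]
  rw [← Real.circleAverage_fun_add (ci_abs_rpow hq hv hr) (ci_abs_rpow hq hw hr)]
  refine Real.circleAverage_mono (ci_abs_rpow hq hu hr)
    ((ci_abs_rpow hq hv hr).add (ci_abs_rpow hq hw hr)) ?_
  intro z hz
  rw [abs_of_pos hr.1] at hz
  calc |u z| ^ q ≤ (|v z| + |w z|) ^ q := Real.rpow_le_rpow (abs_nonneg _) (h z hz) hq.le
    _ ≤ _ := Real.rpow_add_le_add_rpow (abs_nonneg _) (abs_nonneg _) hq.le hq1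

lemma circMeanR_mono_exp {q q' : ℝ} (hq : 0 < q) (hqq : q ≤ q') {u : ℂ → ℝ}
    (hu : ContinuousOn u (ball (0 : ℂ) 1)) {r : ℝ} (hr : r ∈ Ioo (0 : ℝ) 1) :
    circMeanR q u r ≤ 1 + circMeanR q' u r := by
  simp only [circMeanR_eq]
  rw [← Real.circleAverage_const (1 : ℝ) (0 : ℂ) r, ← Real.circleAverage_fun_add
    (circleIntegrable_const _ _ _) (ci_abs_rpow (hq.trans_le hqq) hu hr)]
  refine Real.circleAverage_mono (ci_abs_rpow hq hu hr)
    ((circleIntegrable_const _ _ _).add (ci_abs_rpow (hq.trans_le hqq) hu hr)) ?_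
  intro z _
  rcases le_total |u z| 1 with h | h
  · have := Real.rpow_le_one (abs_nonneg (u z)) h hq.le
    have h2 : 0 ≤ |u z| ^ q' := by positivity
    linarith
  · have := Real.rpow_le_rpow_of_exponent_le h hqq
    linarith

lemma circMeanR_smul (q : ℝ) (u : ℂ → ℝ) (t r : ℝ) :
    circMeanR q (fun z => t * u z) r = |t| ^ q * circMeanR q u r := by
  simp only [circMeanR_eq]
  rw [← smul_eq_mul, ← Real.circleAverage_fun_smul]
  congr 1
  ext z
  rw [abs_mul, Real.mul_rpow (abs_nonneg _) (abs_nonneg _), smul_eq_mul]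

lemma circMeanR_le_const {q : ℝ} (hq : 0 < q) {u : ℂ → ℝ}
    (hu : ContinuousOn u (ball (0 : ℂ) 1)) {r : ℝ} (hr : r ∈ Ioo (0 : ℝ) 1) {a : ℝ}
    (h : ∀ z ∈ sphere (0 : ℂ) r, |u z| ^ q ≤ a) :
    circMeanR q u r ≤ a := by
  rw [circMeanR_eq]
  refine Real.circleAverage_mono_on_of_le_circle (ci_abs_rpow hq hu hr) ?_
  rw [abs_of_pos hr.1]
  exact h

lemma cont_re {f : ℂ → ℂ} (hf : DifferentiableOn ℂ f (ball (0 : ℂ) 1)) :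
    ContinuousOn (fun z => (f z).re) (ball (0 : ℂ) 1) :=
  Complex.continuous_re.comp_continuousOn hf.continuousOn

lemma cont_im {f : ℂ → ℂ} (hf : DifferentiableOn ℂ f (ball (0 : ℂ) 1)) :
    ContinuousOn (fun z => (f z).im) (ball (0 : ℂ) 1) :=
  Complex.continuous_im.comp_continuousOn hf.continuousOn

section metric

variable {p : ℝ}

lemma harm_bdd (hp0 : 0 < p) (hp1 : p < 1) (f g : HarmVp p) :
    BddAbove (Set.range (fun r : Set.Ioo (0 : ℝ) 1 =>
      circMeanR p (fun z => (f.1 z - g.1 z).re) r)) := by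
  obtain ⟨C, hC⟩ := f.2.2.2
  obtain ⟨D, hD⟩ := g.2.2.2
  refine ⟨C + D, ?_⟩
  rintro _ ⟨⟨r, hr⟩, rfl⟩
  refine (circMeanR_le_add hp0 hp1.le (cont_re (f := fun z => f.1 z - g.1 z) (f.2.1.sub g.2.1))
    (cont_re f.2.1) (cont_re g.2.1) hr ?_).trans (add_le_add (hC r hr) (hD r hr))
  intro z _
  rw [Complex.sub_re]
  exact abs_sub _ _

lemma le_harmDist (hp0 : 0 < p) (hp1 : p < 1) (f g : HarmVp p) {r : ℝ}
    (hr : r ∈ Ioo (0 : ℝ) 1) :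
    circMeanR p (fun z => (f.1 z - g.1 z).re) r ≤ harmDistP p f g :=
  le_ciSup (harm_bdd hp0 hp1 f g) ⟨r, hr⟩

lemma harmDist_le {f g : HarmVp p} {C : ℝ}
    (h : ∀ r ∈ Ioo (0 : ℝ) 1, circMeanR p (fun z => (f.1 z - g.1 z).re) r ≤ C) :
    harmDistP p f g ≤ C := by
  have : Nonempty (Set.Ioo (0 : ℝ) 1) := ⟨⟨1 / 2, by norm_num, by norm_num⟩⟩
  exact ciSup_le (fun r => h r r.2)

lemma harmDist_triangle (hp0 : 0 < p) (hp1 : p < 1) (f g k : HarmVp p) :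
    harmDistP p f k ≤ harmDistP p f g + harmDistP p g k := by
  refine harmDist_le (fun r hr => ?_)
  refine (circMeanR_le_add hp0 hp1.le (cont_re (f := fun z => f.1 z - k.1 z) (f.2.1.sub k.2.1))
    (cont_re (f := fun z => f.1 z - g.1 z) (f.2.1.sub g.2.1))
    (cont_re (f := fun z => g.1 z - k.1 z) (g.2.1.sub k.2.1)) hr ?_).trans
    (add_le_add (le_harmDist hp0 hp1 f g hr) (le_harmDist hp0 hp1 g k hr))
  intro z _
  simp only [Complex.sub_re]
  exact abs_sub_le _ _ _

lemma harmDist_self (hp0 : 0 < p) (f : HarmVp p) : harmDistP p f f ≤ 0 := by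
  refine harmDist_le (fun r hr => ?_)
  refine circMeanR_le_const hp0 (by simpa using continuousOn_const) hr ?_
  intro z _
  simp [Real.zero_rpow hp0.ne']

lemma ball_isOpen (f : HarmVp p) {ε : ℝ} (hε : 0 < ε) :
    @IsOpen _ (ballTopology (harmDistP p)) {g | harmDistP p f g < ε} :=
  TopologicalSpace.isOpen_generateFrom_of_mem ⟨f, ε, hε, rfl⟩

lemma exists_ball (hp0 : 0 < p) (hp1 : p < 1) {U : Set (HarmVp p)}
    (hU : @IsOpen _ (ballTopology (harmDistP p)) U) :
    ∀ f ∈ U, ∃ ε > 0, ∀ g, harmDistP p f g < ε → g ∈ U := by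
  change TopologicalSpace.GenerateOpen _ U at hU
  induction hU with
  | basic s hs =>
    obtain ⟨x, ε, hε, rfl⟩ := hs
    intro f hf
    refine ⟨ε - harmDistP p x f, by simpa using hf, fun g hg => ?_⟩
    have := harmDist_triangle hp0 hp1 x f g
    simp only [mem_ofPred_eq]
    linarith
  | univ => exact fun f _ => ⟨1, one_pos, fun _ _ => trivial⟩
  | inter s t _ _ hs ht =>
    intro f hf
    obtain ⟨a, ha, ha'⟩ := hs f hf.1
    obtain ⟨b, hb, hb'⟩ := ht f hf.2
    exact ⟨min a b, lt_min ha hb, fun g hg =>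
      ⟨ha' g (hg.trans_le (min_le_left _ _)), hb' g (hg.trans_le (min_le_right _ _))⟩⟩
  | sUnion S _ hS =>
    rintro f ⟨s, hs, hf⟩
    obtain ⟨a, ha, ha'⟩ := hS s hs f hf
    exact ⟨a, ha, fun g hg => ⟨s, hs, ha' g hg⟩⟩

lemma open_level (hp0 : 0 < p) (hp1 : p < 1) {q : ℝ} (hq : 0 < q) (hq1 : q ≤ 1) (C : ℝ) :
    @IsOpen _ (ballTopology (harmDistP p)) {f : HarmVp p | ∃ r ∈ Set.Ioo (0 : ℝ) 1,
        C < circMeanR q (fun z => (f.1 z).im) r} := by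
  let := ballTopology (harmDistP p)
  rw [isOpen_iff_forall_mem_open]
  rintro f ⟨r, hr, hf⟩
  set a := circMeanR q (fun z => (f.1 z).im) r - C with ha
  have ha0 : 0 < a := by rw [ha]; linarith
  set K : ℝ := 6 * 2 ^ ((1 - p) / p) with hK
  have hK0 : 0 < K := by positivity
  set R := (1 + r) / 2 with hR
  have hr0 := hr.1
  have hr1 := hr.2
  have hRr : 0 < R - r := by rw [hR]; linarith
  -- target size of `‖f - g‖` on the circle
  set η : ℝ := (a / 2) ^ (1 / q) with hη
  have hη0 : 0 < η := by positivity
  set ε : ℝ := η ^ p * (R - r) / K with hε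
  have hε0 : 0 < ε := by positivity
  refine ⟨{g | harmDistP p f g < ε}, ?_, ball_isOpen f hε0, ?_⟩
  swap
  · exact (harmDist_self hp0 f).trans_lt hε0
  intro g hg
  refine ⟨r, hr, ?_⟩
  have hdiff : DifferentiableOn ℂ (fun z => f.1 z - g.1 z) (ball (0 : ℂ) 1) := f.2.1.sub g.2.1
  have hl : ∀ z ∈ sphere (0 : ℂ) r, ‖f.1 z - g.1 z‖ ≤ η := by
    intro z hz
    have hz' : ‖z‖ = r := by simpa using hz
    have h1 := hardy_littlewood hdiff (by simp [f.2.2.1, g.2.2.1]) hp0 hp1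
      (N := harmDistP p f g) (fun s hs0 hs1 => by
        have := le_harmDist hp0 hp1 f g (r := s) ⟨hs0, hs1⟩
        rwa [circMeanR_eq] at this) (R := R) (by linarith) (by linarith) (z := z)
        (by linarith)
    rw [hz', ← hK] at h1
    have h2 : (R - r) * ‖f.1 z - g.1 z‖ ^ p ≤ (R - r) * η ^ p := by
      have h3 : K * harmDistP p f g ≤ K * ε := mul_le_mul_of_nonneg_left (le_of_lt hg) hK0.le
      have h4 : K * ε = (R - r) * η ^ p := by rw [hε]; field_simp
      exact h1.trans (h3.trans h4.le)
    have h5 := le_of_mul_le_mul_left h2 hRr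
    exact (Real.rpow_le_rpow_iff (norm_nonneg _) hη0.le hp0).1 h5
  have h6 : circMeanR q (fun z => (f.1 z).im) r ≤ circMeanR q (fun z => (g.1 z).im) r
      + circMeanR q (fun z => (f.1 z - g.1 z).im) r := by
    refine circMeanR_le_add hq hq1 (cont_im f.2.1) (cont_im g.2.1) (cont_im hdiff) hr ?_
    intro z _
    rw [Complex.sub_im]
    have := abs_add_le (g.1 z).im ((f.1 z).im - (g.1 z).im)
    simpa using this
  have h7 : circMeanR q (fun z => (f.1 z - g.1 z).im) r ≤ a / 2 := by
    refine circMeanR_le_const hq (cont_im hdiff) hr ?_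
    intro z hz
    calc |(f.1 z - g.1 z).im| ^ q ≤ η ^ q :=
          Real.rpow_le_rpow (abs_nonneg _) ((Complex.abs_im_le_norm _).trans (hl z hz)) hq.le
      _ = a / 2 := by
          rw [hη, ← Real.rpow_mul (by positivity), one_div_mul_cancel hq.ne', Real.rpow_one]
  linarith

/-- The conclusion, given one bad function. -/
lemma generic_of_exists (hp0 : 0 < p) (hp1 : p < 1) (h : HarmVp p)
    (hbad : ∀ q : ℝ, 0 < q → ∀ C : ℝ, ∃ r ∈ Set.Ioo (0 : ℝ) 1,
        C < circMeanR q (fun z => (h.1 z).im) r) :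
    @Dense (HarmVp p) (ballTopology (harmDistP p))
      {f : HarmVp p | ∀ q : ℝ, 0 < q → ∀ C : ℝ, ∃ r ∈ Set.Ioo (0 : ℝ) 1,
        C < circMeanR q (fun z => (f.1 z).im) r} := by
  let := ballTopology (harmDistP p)
  rw [dense_iff_inter_open]
  rintro U hU ⟨f, hfU⟩
  obtain ⟨ε, hε, hball⟩ := exists_ball hp0 hp1 hU f hfU
  by_cases hf : ∀ q : ℝ, 0 < q → ∀ C : ℝ, ∃ r ∈ Set.Ioo (0 : ℝ) 1,
        C < circMeanR q (fun z => (f.1 z).im) r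
  · exact ⟨f, hfU, hf⟩
  push Not at hf
  obtain ⟨q0, hq0, C0, hC0⟩ := hf
  obtain ⟨D, hD⟩ := h.2.2.2
  obtain ⟨Cf, hCf⟩ := f.2.2.2
  set t : ℝ := (ε / (2 * (|D| + 1))) ^ (1 / p) with ht
  have ht0 : 0 < t := by positivity
  have htp : t ^ p = ε / (2 * (|D| + 1)) := by
    rw [ht, ← Real.rpow_mul (by positivity), one_div_mul_cancel hp0.ne', Real.rpow_one]
  have hth : DifferentiableOn ℂ (fun z => (t : ℂ) * h.1 z) (ball (0 : ℂ) 1) :=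
    h.2.1.const_mul _
  have hgd : DifferentiableOn ℂ (fun z => f.1 z + (t : ℂ) * h.1 z) (ball (0 : ℂ) 1) :=
    f.2.1.add hth
  have hre : ∀ r ∈ Ioo (0 : ℝ) 1, circMeanR p (fun z => ((t : ℂ) * h.1 z).re) r ≤ ε / 2 := by
    intro r hr
    have : (fun z => ((t : ℂ) * h.1 z).re) = fun z => t * (h.1 z).re := by
      ext z; simp
    rw [this, circMeanR_smul, abs_of_pos ht0, htp]
    have h1 : circMeanR p (fun z => (h.1 z).re) r ≤ |D| + 1 := by
      linarith [hD r hr, le_abs_self D]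
    calc ε / (2 * (|D| + 1)) * circMeanR p (fun z => (h.1 z).re) r
        ≤ ε / (2 * (|D| + 1)) * (|D| + 1) := by gcongr
      _ = ε / 2 := by field_simp
  let g : HarmVp p := ⟨fun z => f.1 z + (t : ℂ) * h.1 z, hgd, by
      simp [f.2.2.1, h.2.2.1], Cf + ε / 2, fun r hr => by
        refine (circMeanR_le_add hp0 hp1.le (cont_re hgd) (cont_re f.2.1) (cont_re hth) hr
          ?_).trans (add_le_add (hCf r hr) (hre r hr))
        intro z _
        rw [Complex.add_re]
        exact abs_add_le _ _⟩
  have hfg : harmDistP p f g < ε := by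
    refine (harmDist_le (C := ε / 2) (fun r hr => ?_)).trans_lt (by linarith)
    have h2 := hre r hr
    rw [circMeanR_eq] at h2 ⊢
    refine le_trans (le_of_eq ?_) h2
    congr 1
    ext z
    simp [g]
  refine ⟨g, hball g hfg, ?_⟩
  by_contra hg
  simp only [mem_ofPred_eq] at hg
  push Not at hg
  obtain ⟨q1, hq1, C1, hC1⟩ := hg
  set q := min (min q0 q1) 1 with hq
  have hqpos : 0 < q := by positivity
  obtain ⟨r, hr, hlt⟩ := hbad q hqpos ((1 + C1 + (1 + C0)) / t ^ q)
  have a0 := (circMeanR_mono_exp hqpos ((min_le_left _ _).trans (min_le_left _ _))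
    (cont_im f.2.1) hr).trans (add_le_add_right (hC0 r hr) 1)
  have a1 := (circMeanR_mono_exp hqpos ((min_le_left _ _).trans (min_le_right _ _))
    (cont_im g.2.1) hr).trans (add_le_add_right (hC1 r hr) 1)
  have a2 : circMeanR q (fun z => t * (h.1 z).im) r ≤ circMeanR q (fun z => (g.1 z).im) r
      + circMeanR q (fun z => (f.1 z).im) r := by
    refine circMeanR_le_add hqpos (min_le_right _ _) ((cont_im h.2.1).const_mul t)
      (cont_im g.2.1) (cont_im f.2.1) hr ?_
    intro z _
    have : t * (h.1 z).im = (g.1 z).im - (f.1 z).im := by simp [g]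
    rw [this]
    exact abs_sub _ _
  rw [circMeanR_smul, abs_of_pos ht0] at a2
  rw [div_lt_iff₀ (by positivity)] at hlt
  linarith

end metric

lemma gdelta_part {p : ℝ} (hp0 : 0 < p) (hp1 : p < 1) :
    @IsGδ (HarmVp p) (ballTopology (harmDistP p))
      {f : HarmVp p | ∀ q : ℝ, 0 < q → ∀ C : ℝ, ∃ r ∈ Set.Ioo (0 : ℝ) 1,
        C < circMeanR q (fun z => (f.1 z).im) r} := by
  let := ballTopology (harmDistP p)
  have : {f : HarmVp p | ∀ q : ℝ, 0 < q → ∀ C : ℝ, ∃ r ∈ Set.Ioo (0 : ℝ) 1,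
        C < circMeanR q (fun z => (f.1 z).im) r} =
      ⋂ n : ℕ, ⋂ m : ℕ, {f : HarmVp p | ∃ r ∈ Set.Ioo (0 : ℝ) 1,
        (m : ℝ) < circMeanR (1 / ((n : ℝ) + 1)) (fun z => (f.1 z).im) r} := by
    ext f
    simp only [mem_ofPred_eq, mem_iInter]
    constructor
    · intro h n m
      exact h _ (by positivity) m
    · intro h q hq C
      obtain ⟨n, hn⟩ := exists_nat_one_div_lt hq
      obtain ⟨m, hm⟩ := exists_nat_gt (1 + C)
      obtain ⟨r, hr, hlt⟩ := h n m
      refine ⟨r, hr, ?_⟩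
      have := circMeanR_mono_exp (q := 1 / ((n : ℝ) + 1)) (by positivity) hn.le
        (cont_im f.2.1) hr
      linarith
  rw [this]
  refine IsGδ.iInter (fun n => IsGδ.iInter (fun m => IsOpen.isGδ ?_))
  refine open_level hp0 hp1 (by positivity) ?_ m
  rw [div_le_one (by positivity)]
  have : (0 : ℝ) ≤ n := by positivity
  linarith

/-! ### The building blocks -/

/-- The building block `w / (1 - w ^ 2)` with `w = z ^ (2 ^ j)`. -/
def blk (j : ℕ) (z : ℂ) : ℂ := z ^ (2 ^ j) / (1 - (z ^ (2 ^ j)) ^ 2)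

/-- Sign attached to a boolean. -/
def sgn (b : Bool) : ℂ := if b then 1 else -1

lemma norm_sgn (b : Bool) : ‖sgn b‖ = 1 := by cases b <;> simp [sgn]

/-- The random series. -/
def ser (e : ℕ → Bool) (z : ℂ) : ℂ := ∑' j, sgn (e j) * blk j z

lemma one_sub_pos {w : ℂ} (hw : ‖w‖ < 1) : 0 < (1 - w ^ 2).re := by
  have h1 : (w ^ 2).re ≤ ‖w‖ ^ 2 := by
    rw [← norm_pow]; exact Complex.re_le_norm _
  simp only [Complex.sub_re, Complex.one_re]
  nlinarith [norm_nonneg w]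

lemma one_sub_ne {w : ℂ} (hw : ‖w‖ < 1) : 1 - w ^ 2 ≠ 0 := by
  intro h
  have := one_sub_pos hw
  rw [h] at this
  simp at this

lemma norm_pow_lt {z : ℂ} (hz : ‖z‖ < 1) (j : ℕ) : ‖z ^ (2 ^ j)‖ < 1 := by
  rw [norm_pow]
  exact pow_lt_one₀ (norm_nonneg _) hz (by positivity)

lemma norm_blk_le {r : ℝ} (hr1 : r < 1) {z : ℂ} (hz : ‖z‖ ≤ r) (j : ℕ) :
    ‖blk j z‖ ≤ r ^ j * (1 / (1 - r)) := by
  have hr0 : 0 ≤ r := (norm_nonneg z).trans hz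
  have h1 : ‖z ^ (2 ^ j)‖ ≤ r ^ j := by
    rw [norm_pow]
    calc ‖z‖ ^ 2 ^ j ≤ r ^ 2 ^ j := by gcongr
      _ ≤ r ^ j := pow_le_pow_of_le_one hr0 hr1.le (Nat.lt_two_pow_self).le
  have h2 : 1 - r ≤ ‖1 - (z ^ (2 ^ j)) ^ 2‖ := by
    have h3 : ‖(z ^ (2 ^ j)) ^ 2‖ ≤ r := by
      rw [← pow_mul, norm_pow]
      calc ‖z‖ ^ (2 ^ j * 2) ≤ r ^ (2 ^ j * 2) := by gcongr
        _ ≤ r ^ 1 := pow_le_pow_of_le_one hr0 hr1.le (Nat.one_le_iff_ne_zero.2 (by positivity))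
        _ = r := pow_one r
    have h4 := norm_sub_norm_le (1 : ℂ) ((z ^ (2 ^ j)) ^ 2)
    rw [norm_one] at h4
    linarith
  have h5 : 0 < 1 - r := by linarith
  rw [blk, norm_div, div_eq_mul_one_div]
  gcongr

lemma le_norm_blk {z : ℂ} (hz : ‖z‖ < 1) (j : ℕ) : ‖z‖ ^ (2 ^ j) / 2 ≤ ‖blk j z‖ := by
  have hw := norm_pow_lt hz j
  have h1 : ‖1 - (z ^ (2 ^ j)) ^ 2‖ ≤ 2 := by
    refine (norm_sub_le _ _).trans ?_
    rw [norm_one, norm_pow]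
    nlinarith [norm_nonneg (z ^ 2 ^ j)]
  have h2 : 0 < ‖1 - (z ^ (2 ^ j)) ^ 2‖ := norm_pos_iff.2 (one_sub_ne hw)
  rw [blk, norm_div, norm_pow]
  gcongr

lemma summable_bound {r : ℝ} (hr0 : 0 ≤ r) (hr1 : r < 1) :
    Summable (fun j : ℕ => r ^ j * (1 / (1 - r))) :=
  (summable_geometric_of_lt_one hr0 hr1).mul_right _

lemma norm_term_le {r : ℝ} (hr1 : r < 1) {z : ℂ} (hz : ‖z‖ ≤ r) (b : Bool) (j : ℕ) :
    ‖sgn b * blk j z‖ ≤ r ^ j * (1 / (1 - r)) := by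
  rw [norm_mul, norm_sgn, one_mul]; exact norm_blk_le hr1 hz j

lemma diff_blk (j : ℕ) : DifferentiableOn ℂ (blk j) (ball (0 : ℂ) 1) := by
  unfold blk
  refine DifferentiableOn.div (by fun_prop) (by fun_prop) ?_
  intro z hz
  exact one_sub_ne (norm_pow_lt (by simpa using hz) j)

lemma diff_ser (e : ℕ → Bool) : DifferentiableOn ℂ (ser e) (ball (0 : ℂ) 1) := by
  intro z hz
  have hz1 : ‖z‖ < 1 := by simpa using hz
  obtain ⟨r, hzr, hr1⟩ := exists_between hz1
  have hr0 : 0 ≤ r := (norm_nonneg z).trans hzr.le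
  have h := differentiableOn_tsum_of_summable_norm (F := fun j z => sgn (e j) * blk j z)
    (U := ball (0 : ℂ) r) (summable_bound hr0 hr1)
    (fun j => ((diff_blk j).mono (ball_subset_ball hr1.le)).const_mul _) isOpen_ball
    (fun j w hw => norm_term_le hr1 (by simpa using (mem_ball.1 hw).le) _ j)
  exact (h.differentiableAt (isOpen_ball.mem_nhds (by simpa using hzr))).differentiableWithinAt

lemma ser_zero (e : ℕ → Bool) : ser e 0 = 0 := by
  simp [ser, blk]

lemma re_blk {w : ℂ} (hw : ‖w‖ < 1) :
    |(w / (1 - w ^ 2)).re| ≤ ‖w‖ * (1 - ‖w‖ ^ 2) / ‖1 - w ^ 2‖ ^ 2 := by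
  have h2 : 0 < ‖1 - w ^ 2‖ := norm_pos_iff.2 (one_sub_ne hw)
  have h3 : (w / (1 - w ^ 2)).re = w.re * (1 - ‖w‖ ^ 2) / ‖1 - w ^ 2‖ ^ 2 := by
    rw [Complex.div_re, ← Complex.normSq_eq_norm_sq (1 - w ^ 2), ← add_div]
    congr 1
    rw [← Complex.normSq_eq_norm_sq, Complex.normSq_apply]
    simp [pow_two]
    ring
  have h4 : 0 ≤ 1 - ‖w‖ ^ 2 := by nlinarith [norm_nonneg w]
  rw [h3, abs_div, abs_mul, abs_of_nonneg h4, abs_of_nonneg (by positivity : 0 ≤ ‖1 - w ^ 2‖ ^ 2)]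
  gcongr
  exact Complex.abs_re_le_norm w

/-- Kolmogorov's estimate. -/
lemma kolmogorov {s : ℝ} (hs0 : 0 < s) (hs1 : s < 1) {r : ℝ} (hr : r ∈ Ioo (0 : ℝ) 1) (j : ℕ) :
    Real.circleAverage (fun z => ‖1 - (z ^ (2 ^ j)) ^ 2‖ ^ (-s)) 0 r
      ≤ 1 / Real.cos (s * (Real.pi / 2)) := by
  have hcos : 0 < Real.cos (s * (Real.pi / 2)) := by
    apply Real.cos_pos_of_mem_Ioo
    constructor <;> nlinarith [Real.pi_pos]
  have hslit : ∀ z ∈ ball (0 : ℂ) 1, 0 < (1 - (z ^ (2 ^ j)) ^ 2).re :=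
    fun z hz => one_sub_pos (norm_pow_lt (by simpa using hz) j)
  have hg : DifferentiableOn ℂ (fun z : ℂ => (1 - (z ^ (2 ^ j)) ^ 2) ^ ((-s : ℝ) : ℂ))
      (ball (0 : ℂ) 1) := by
    refine DifferentiableOn.cpow (by fun_prop) (by fun_prop) ?_
    intro z hz
    exact Or.inl (hslit z hz)
  have e1 := (diffContOnCl_of hg hr.1 hr.2).circleAverage
  have e2 := Complex.reCLM.circleAverage_comp_comm (ci_of_cont hr.1 hr.2 hg.continuousOn)
  rw [e1] at e2
  have e3 : Complex.reCLM ((1 - ((0 : ℂ) ^ (2 ^ j)) ^ 2) ^ ((-s : ℝ) : ℂ)) = 1 := by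
    simp
  rw [e3] at e2
  rw [le_div_iff₀ hcos, ← e2, mul_comm, ← smul_eq_mul, ← Real.circleAverage_fun_smul]
  have hcont : ContinuousOn (fun z : ℂ => ‖1 - (z ^ (2 ^ j)) ^ 2‖ ^ (-s)) (ball (0 : ℂ) 1) := by
    refine ContinuousOn.rpow_const (by fun_prop) ?_
    intro z hz
    left
    exact norm_ne_zero_iff.2 (one_sub_ne (norm_pow_lt (by simpa using hz) j))
  refine Real.circleAverage_mono (ci_of_cont hr.1 hr.2 (continuousOn_const.mul hcont))
    (ci_of_cont hr.1 hr.2 (cont_re hg)) ?_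
  intro z hz
  have hp := hslit z (sphere_sub_ball hr.1 hr.2 hz)
  simp only [Function.comp, Complex.reCLM_apply, smul_eq_mul]
  rw [Complex.cpow_ofReal_re, mul_comm]
  refine mul_le_mul_of_nonneg_left ?_ (by positivity)
  have harg : |Complex.arg (1 - (z ^ (2 ^ j)) ^ 2)| ≤ Real.pi / 2 :=
    Complex.abs_arg_le_pi_div_two_iff.2 hp.le
  rw [← Real.cos_abs (Complex.arg _ * _)]
  apply Real.cos_le_cos_of_nonneg_of_le_pi (abs_nonneg _)
  · nlinarith [Real.pi_pos]
  · rw [abs_mul, abs_neg, abs_of_pos hs0, mul_comm]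
    gcongr

lemma mean_re_blk {p : ℝ} (hp0 : 0 < p) (hp1 : p < 1) {r : ℝ} (hr : r ∈ Ioo (0 : ℝ) 1) (j : ℕ) :
    circMeanR p (fun z => (blk j z).re) r ≤
      1 / Real.cos (p * (2 - p) * (Real.pi / 2)) *
        ((r ^ (2 ^ j)) ^ p * (1 - (r ^ (2 ^ j)) ^ 2) ^ (p * (1 - p))) := by
  set s := p * (2 - p) with hs
  have hs0 : 0 < s := by rw [hs]; nlinarith
  have hs1 : s < 1 := by rw [hs]; nlinarith [sq_nonneg (1 - p), sq_pos_of_pos (sub_pos.2 hp1)]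
  set x := r ^ (2 ^ j) with hx
  have hx0 : 0 < x := by have := hr.1; positivity
  have hx1 : x < 1 := pow_lt_one₀ hr.1.le hr.2 (by positivity)
  set T := x ^ p * (1 - x ^ 2) ^ (p * (1 - p)) with hT
  have hy : 0 < 1 - x ^ 2 := by nlinarith
  have hT0 : 0 ≤ T := by positivity
  have hcont : ContinuousOn (fun z : ℂ => ‖1 - (z ^ (2 ^ j)) ^ 2‖ ^ (-s)) (ball (0 : ℂ) 1) := by
    refine ContinuousOn.rpow_const (by fun_prop) ?_
    intro z hz
    left
    exact norm_ne_zero_iff.2 (one_sub_ne (norm_pow_lt (by simpa using hz) j))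
  rw [circMeanR_eq]
  calc Real.circleAverage (fun z => |(blk j z).re| ^ p) 0 r
      ≤ Real.circleAverage (fun z => T • ‖1 - (z ^ (2 ^ j)) ^ 2‖ ^ (-s)) 0 r := by
        refine Real.circleAverage_mono (ci_abs_rpow hp0 (cont_re (diff_blk j)) hr)
          (ci_of_cont hr.1 hr.2 (continuousOn_const.mul hcont)) ?_
        intro z hz
        have hz1 : ‖z‖ < 1 := by simpa using sphere_sub_ball hr.1 hr.2 hz
        rw [abs_of_pos hr.1] at hz
        have hz' : ‖z‖ = r := by simpa using hz
        have hw := norm_pow_lt hz1 j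
        have hwx : ‖z ^ (2 ^ j)‖ = x := by rw [norm_pow, hz']
        have h1 := re_blk hw
        rw [hwx] at h1
        have h2 : 0 < ‖1 - (z ^ (2 ^ j)) ^ 2‖ := norm_pos_iff.2 (one_sub_ne hw)
        have h3 : 1 - x ^ 2 ≤ ‖1 - (z ^ (2 ^ j)) ^ 2‖ := by
          have h4 := norm_sub_norm_le (1 : ℂ) ((z ^ (2 ^ j)) ^ 2)
          rwa [norm_one, norm_pow _ 2, hwx] at h4
        set D := ‖1 - (z ^ (2 ^ j)) ^ 2‖ with hD
        have h5 : |(blk j z).re| ^ p ≤ (x * (1 - x ^ 2) / D ^ 2) ^ p :=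
          Real.rpow_le_rpow (abs_nonneg _) h1 hp0.le
        refine h5.trans ?_
        have h6 : (x * (1 - x ^ 2) / D ^ 2) ^ p
            = x ^ p * (1 - x ^ 2) ^ p * (D ^ (-(p ^ 2)) * D ^ (-s)) := by
          rw [Real.div_rpow (by positivity) (by positivity), Real.mul_rpow hx0.le hy.le,
            ← Real.rpow_add h2, div_eq_mul_inv, ← Real.rpow_natCast D 2, ← Real.rpow_mul h2.le,
            ← Real.rpow_neg h2.le]
          congr 2
          rw [hs]; push_cast; ring
        have h7 : D ^ (-(p ^ 2)) ≤ (1 - x ^ 2) ^ (-(p ^ 2)) :=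
          Real.rpow_le_rpow_of_nonpos hy h3 (by nlinarith)
        rw [h6, smul_eq_mul]
        calc x ^ p * (1 - x ^ 2) ^ p * (D ^ (-(p ^ 2)) * D ^ (-s))
            ≤ x ^ p * (1 - x ^ 2) ^ p * ((1 - x ^ 2) ^ (-(p ^ 2)) * D ^ (-s)) := by gcongr
          _ = x ^ p * ((1 - x ^ 2) ^ p * (1 - x ^ 2) ^ (-(p ^ 2))) * D ^ (-s) := by ring
          _ = T * D ^ (-s) := by
            rw [← Real.rpow_add hy, hT]
            congr 3
            ring
    _ = T * Real.circleAverage (fun z => ‖1 - (z ^ (2 ^ j)) ^ 2‖ ^ (-s)) 0 r := by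
        rw [Real.circleAverage_fun_smul, smul_eq_mul]
    _ ≤ T * (1 / Real.cos (s * (Real.pi / 2))) := by
        gcongr
        exact kolmogorov hs0 hs1 hr j
    _ = _ := by ring

lemma tele_step {c : ℝ} (hc0 : 0 < c) (hc1 : c ≤ 1) {y : ℝ} (hy0 : 0 ≤ y) (hy1 : y ≤ 1) :
    y * (1 - y) ^ c * (2 ^ c - 1) ≤ (1 - y ^ 2) ^ c - (1 - y) ^ c := by
  have h1 : 1 + (2 ^ c - 1) * y ≤ (1 + y) ^ c := by
    have := (Real.concaveOn_rpow hc0.le hc1).2 (show (1 : ℝ) ∈ Ici 0 by simp)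
      (show (2 : ℝ) ∈ Ici 0 by simp) (show 0 ≤ 1 - y by linarith) hy0 (by ring)
    simp only [smul_eq_mul, Real.one_rpow] at this
    have h2 : (1 - y) * 1 + y * 2 = 1 + y := by ring
    rw [h2] at this
    linarith
  have h3 : (1 - y ^ 2) ^ c = (1 - y) ^ c * (1 + y) ^ c := by
    rw [← Real.mul_rpow (by linarith) (by linarith)]; congr 1; ring
  have h4 : 0 ≤ (1 - y) ^ c := Real.rpow_nonneg (by linarith) _
  rw [h3]
  nlinarith [mul_le_mul_of_nonneg_left h1 h4]

lemma tele_sum {p : ℝ} (hp0 : 0 < p) (hp1 : p < 1) {c : ℝ} (hc0 : 0 < c) (hc1 : c ≤ 1)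
    {r : ℝ} (hr : r ∈ Ioo (0 : ℝ) 1) (L : ℕ) :
    ∑ j ∈ Finset.range L, ((r ^ (2 ^ j)) ^ p * (1 - (r ^ (2 ^ j)) ^ 2) ^ c)
      ≤ (2 / p) ^ c * (1 / (2 ^ c - 1)) := by
  have h2c : 0 < (2 : ℝ) ^ c - 1 := by
    have := Real.one_lt_rpow (x := 2) (by norm_num) hc0
    linarith
  set Y : ℕ → ℝ := fun j => (r ^ (2 ^ j)) ^ p with hY
  have hx0 : ∀ j : ℕ, 0 < r ^ (2 ^ j) := fun j => by have := hr.1; positivity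
  have hx1 : ∀ j : ℕ, r ^ (2 ^ j) < 1 := fun j => pow_lt_one₀ hr.1.le hr.2 (by positivity)
  have hY0 : ∀ j, 0 ≤ Y j := fun j => Real.rpow_nonneg (hx0 j).le _
  have hY1 : ∀ j, Y j ≤ 1 := fun j => Real.rpow_le_one (hx0 j).le (hx1 j).le hp0.le
  have hYs : ∀ j, Y (j + 1) = Y j ^ 2 := by
    intro j
    simp only [hY]
    rw [pow_succ 2 j, pow_mul, pow_two (r ^ 2 ^ j), Real.mul_rpow (hx0 j).le (hx0 j).le,
      ← pow_two]
  have hterm : ∀ j, (r ^ (2 ^ j)) ^ p * (1 - (r ^ (2 ^ j)) ^ 2) ^ c ≤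
      (2 / p) ^ c * (1 / (2 ^ c - 1)) * ((1 - Y (j + 1)) ^ c - (1 - Y j) ^ c) := by
    intro j
    have h1 : 1 - (r ^ (2 ^ j)) ^ 2 ≤ (2 / p) * (1 - Y j) := by
      have hb := one_add_mul_self_le_rpow_one_add (s := Y j - 1) (by linarith [hY0 j])
        (p := 2 / p) (by rw [le_div_iff₀ hp0]; linarith)
      have h3 : (1 + (Y j - 1)) ^ (2 / p) = (r ^ (2 ^ j)) ^ 2 := by
        rw [add_sub_cancel]
        simp only [hY]
        rw [← Real.rpow_mul (hx0 j).le, mul_div_cancel₀ _ hp0.ne']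
        exact Real.rpow_two _
      rw [h3] at hb
      linarith
    have h4 : 0 ≤ 1 - (r ^ (2 ^ j)) ^ 2 := by nlinarith [hx0 j, hx1 j]
    have h5 : (1 - (r ^ (2 ^ j)) ^ 2) ^ c ≤ (2 / p) ^ c * (1 - Y j) ^ c := by
      rw [← Real.mul_rpow (by positivity) (by linarith [hY1 j])]
      exact Real.rpow_le_rpow h4 h1 hc0.le
    have h6 := tele_step hc0 hc1 (hY0 j) (hY1 j)
    rw [← hYs] at h6
    have h7 : Y j * (1 - Y j) ^ c ≤ (1 / (2 ^ c - 1)) * ((1 - Y (j + 1)) ^ c - (1 - Y j) ^ c) := by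
      rw [div_mul_eq_mul_div, one_mul, le_div_iff₀ h2c]
      exact h6
    calc (r ^ (2 ^ j)) ^ p * (1 - (r ^ (2 ^ j)) ^ 2) ^ c
        ≤ Y j * ((2 / p) ^ c * (1 - Y j) ^ c) := mul_le_mul_of_nonneg_left h5 (hY0 j)
      _ = (2 / p) ^ c * (Y j * (1 - Y j) ^ c) := by ring
      _ ≤ (2 / p) ^ c * ((1 / (2 ^ c - 1)) * ((1 - Y (j + 1)) ^ c - (1 - Y j) ^ c)) := by gcongr
      _ = _ := by ring
  refine (Finset.sum_le_sum (fun j _ => hterm j)).trans ?_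
  rw [← Finset.mul_sum, Finset.sum_range_sub (fun j => (1 - Y j) ^ c)]
  have h8 : (1 - Y L) ^ c ≤ 1 := Real.rpow_le_one (by linarith [hY1 L]) (by linarith [hY0 L]) hc0.le
  have h9 : 0 ≤ (1 - Y 0) ^ c := Real.rpow_nonneg (by linarith [hY1 0]) _
  have h10 : 0 ≤ (2 / p) ^ c * (1 / (2 ^ c - 1)) := by positivity
  nlinarith

/-! ### The random series: real part bounded, imaginary part generically unbounded -/

lemma circMeanR_finset_sum {p : ℝ} (hp0 : 0 < p) (hp1 : p < 1) {r : ℝ} (hr : r ∈ Ioo (0 : ℝ) 1)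
    (e : ℕ → Bool) (L : ℕ) :
    circMeanR p (fun z => (∑ j ∈ Finset.range L, sgn (e j) * blk j z).re) r ≤
      ∑ j ∈ Finset.range L, circMeanR p (fun z => (blk j z).re) r := by
  have hdterm : ∀ j, DifferentiableOn ℂ (fun z => sgn (e j) * blk j z) (ball (0 : ℂ) 1) :=
    fun j => (diff_blk j).const_mul _
  have hds : ∀ L, DifferentiableOn ℂ (fun z => ∑ j ∈ Finset.range L, sgn (e j) * blk j z)
      (ball (0 : ℂ) 1) := fun L => DifferentiableOn.fun_sum (fun j _ => hdterm j)
  induction L with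
  | zero => simp [circMeanR, Real.zero_rpow hp0.ne']
  | succ L ih =>
    rw [Finset.sum_range_succ]
    refine (circMeanR_le_add hp0 hp1.le (cont_re (hds (L + 1))) (cont_re (hds L))
      (cont_re (diff_blk L)) hr ?_).trans (add_le_add_left ih _)
    intro z _
    rw [Finset.sum_range_succ, Complex.add_re]
    refine (abs_add_le _ _).trans (le_of_eq ?_)
    congr 1
    cases e L <;> simp [sgn]

lemma ser_re_bdd {p : ℝ} (hp0 : 0 < p) (hp1 : p < 1) :
    ∃ C : ℝ, ∀ e : ℕ → Bool, ∀ r ∈ Ioo (0 : ℝ) 1, circMeanR p (fun z => (ser e z).re) r ≤ C := by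
  set c := p * (1 - p) with hc
  have hc0 : 0 < c := mul_pos hp0 (by linarith)
  have hc1 : c ≤ 1 := by rw [hc]; nlinarith
  set A := 1 / Real.cos (p * (2 - p) * (Real.pi / 2)) with hA
  have hA0 : 0 ≤ A := by
    rw [hA]
    apply one_div_nonneg.2
    apply Real.cos_nonneg_of_mem_Icc
    have h1 : p * (2 - p) < 1 := by nlinarith [sq_pos_of_pos (sub_pos.2 hp1)]
    have h2 : 0 < p * (2 - p) := by nlinarith
    constructor <;> nlinarith [Real.pi_pos]
  refine ⟨A * ((2 / p) ^ c * (1 / (2 ^ c - 1))) + 1, fun e r hr => ?_⟩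
  have hunif := tendstoUniformlyOn_tsum_nat (f := fun j z => sgn (e j) * blk j z)
    (s := sphere (0 : ℂ) r) (summable_bound hr.1.le hr.2)
    (fun j z hz => norm_term_le hr.2 (by simpa using (mem_sphere.1 hz).le) _ j)
  rw [Metric.tendstoUniformlyOn_iff] at hunif
  obtain ⟨L, hL⟩ := (hunif 1 one_pos).exists
  have hdF : DifferentiableOn ℂ (fun z => ∑ j ∈ Finset.range L, sgn (e j) * blk j z)
      (ball (0 : ℂ) 1) := DifferentiableOn.fun_sum (fun j _ => (diff_blk j).const_mul _)
  have hdd : DifferentiableOn ℂ (fun z => ser e z - ∑ j ∈ Finset.range L, sgn (e j) * blk j z)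
      (ball (0 : ℂ) 1) := (diff_ser e).sub hdF
  refine (circMeanR_le_add hp0 hp1.le (cont_re (diff_ser e)) (cont_re hdF) (cont_re hdd) hr
    ?_).trans (add_le_add ?_ ?_)
  · intro z _
    rw [Complex.sub_re]
    simpa using abs_add_le (∑ j ∈ Finset.range L, sgn (e j) * blk j z).re
      ((ser e z).re - (∑ j ∈ Finset.range L, sgn (e j) * blk j z).re)
  · refine (circMeanR_finset_sum hp0 hp1 hr e L).trans ?_
    refine (Finset.sum_le_sum (fun j _ => mean_re_blk hp0 hp1 hr j)).trans ?_
    rw [← Finset.mul_sum]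
    exact mul_le_mul_of_nonneg_left (tele_sum hp0 hp1 hc0 hc1 hr L) hA0
  · refine circMeanR_le_const hp0 (cont_re hdd) hr ?_
    intro z hz
    refine Real.rpow_le_one (abs_nonneg _) ((Complex.abs_re_le_norm _).trans ?_) hp0.le
    have := hL z hz
    rw [dist_eq_norm] at this
    exact this.le

lemma continuous_mean {q : ℝ} (hq : 0 < q) {r : ℝ} (hr : r ∈ Ioo (0 : ℝ) 1) :
    Continuous (fun e : ℕ → Bool => circMeanR q (fun z => (ser e z).im) r) := by
  unfold circMeanR
  refine continuous_const.mul ?_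
  apply intervalIntegral.continuous_parametric_intervalIntegral_of_continuous'
  have h : Continuous (fun x : (ℕ → Bool) × ℝ =>
      ser x.1 ((r : ℂ) * Complex.exp ((x.2 : ℂ) * Complex.I))) := by
    have hnorm : ∀ θ : ℝ, ‖(r : ℂ) * Complex.exp ((θ : ℂ) * Complex.I)‖ = r := by
      intro θ
      rw [norm_mul, Complex.norm_exp_ofReal_mul_I, mul_one, Complex.norm_real, Real.norm_eq_abs,
        abs_of_pos hr.1]
    unfold ser
    refine continuous_tsum (fun j => ?_) (summable_bound hr.1.le hr.2)
      (fun j x => norm_term_le hr.2 (hnorm x.2).le _ j)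
    refine Continuous.mul ?_ ?_
    · have : Continuous sgn := continuous_of_discreteTopology
      fun_prop
    · have h1 : Continuous (fun x : (ℕ → Bool) × ℝ =>
          (r : ℂ) * Complex.exp ((x.2 : ℂ) * Complex.I)) := by fun_prop
      refine (diff_blk j).continuousOn.comp_continuous h1 ?_
      intro x
      rw [mem_ball_zero_iff, hnorm]
      exact hr.2
  exact (cont_abs_rpow hq).comp (Complex.continuous_im.comp h)

/-- Signed sum. -/
def sgnSum (s A : Finset ℕ) (a : ℕ → ℂ) : ℂ := ∑ j ∈ s, (if j ∈ A then -1 else 1) * a j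

lemma sgnSum_insert_not {s A : Finset ℕ} {i : ℕ} (hi : i ∉ s) (hA : A ⊆ s) (a : ℕ → ℂ) :
    sgnSum (insert i s) A a = a i + sgnSum s A a := by
  have : i ∉ A := fun h => hi (hA h)
  simp [sgnSum, Finset.sum_insert hi, this]

lemma sgnSum_insert {s A : Finset ℕ} {i : ℕ} (hi : i ∉ s) (a : ℕ → ℂ) :
    sgnSum (insert i s) (insert i A) a = - a i + sgnSum s A a := by
  simp only [sgnSum, Finset.sum_insert hi, Finset.mem_insert_self, if_true, neg_one_mul]
  congr 1
  refine Finset.sum_congr rfl (fun j hj => ?_)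
  have : j ≠ i := fun h => hi (h ▸ hj)
  simp [this]

lemma par_two (x a : ℂ) : ‖x + a‖ ^ 2 + ‖x - a‖ ^ 2 = 2 * ‖x‖ ^ 2 + 2 * ‖a‖ ^ 2 := by
  simp only [← Complex.normSq_eq_norm_sq, Complex.normSq_apply, Complex.add_re, Complex.add_im,
    Complex.sub_re, Complex.sub_im]
  ring

lemma par_four (x a : ℂ) : ‖x + a‖ ^ 4 + ‖x - a‖ ^ 4 ≤
    2 * ‖x‖ ^ 4 + 12 * ‖x‖ ^ 2 * ‖a‖ ^ 2 + 2 * ‖a‖ ^ 4 := by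
  have h : ∀ y : ℂ, ‖y‖ ^ 4 = (‖y‖ ^ 2) ^ 2 := fun y => by ring
  simp only [h, ← Complex.normSq_eq_norm_sq, Complex.normSq_apply, Complex.add_re, Complex.add_im,
    Complex.sub_re, Complex.sub_im]
  nlinarith [sq_nonneg (x.re * a.im - x.im * a.re)]

lemma khin_moments (s : Finset ℕ) (a : ℕ → ℂ) (c : ℂ) :
    ∑ A ∈ s.powerset, ‖c + sgnSum s A a‖ ^ 2 = 2 ^ s.card * (‖c‖ ^ 2 + ∑ j ∈ s, ‖a j‖ ^ 2) ∧
    ∑ A ∈ s.powerset, ‖c + sgnSum s A a‖ ^ 4 ≤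
      3 * 2 ^ s.card * (‖c‖ ^ 2 + ∑ j ∈ s, ‖a j‖ ^ 2) ^ 2 := by
  induction s using Finset.induction_on with
  | empty =>
    simp [sgnSum]
    nlinarith [pow_nonneg (norm_nonneg c) 4]
  | insert i s hi ih =>
    obtain ⟨ih2, ih4⟩ := ih
    have hcard : (insert i s).card = s.card + 1 := Finset.card_insert_of_notMem hi
    have e1 : ∀ n : ℕ, ∑ A ∈ (insert i s).powerset, ‖c + sgnSum (insert i s) A a‖ ^ n =
        ∑ A ∈ s.powerset, (‖(c + sgnSum s A a) + a i‖ ^ n + ‖(c + sgnSum s A a) - a i‖ ^ n) := by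
      intro n
      rw [Finset.sum_powerset_insert hi, ← Finset.sum_add_distrib]
      refine Finset.sum_congr rfl (fun A hA => ?_)
      rw [sgnSum_insert_not hi (Finset.mem_powerset.1 hA), sgnSum_insert hi]
      congr 3 <;> ring
    have hpc : ∑ _A ∈ s.powerset, (1 : ℝ) = 2 ^ s.card := by
      simp [Finset.card_powerset]
    rw [e1, e1, hcard, Finset.sum_insert hi]
    set V := ‖c‖ ^ 2 + ∑ j ∈ s, ‖a j‖ ^ 2 with hV
    have hV0 : 0 ≤ V := by positivity
    have hV' : ‖c‖ ^ 2 + (‖a i‖ ^ 2 + ∑ j ∈ s, ‖a j‖ ^ 2) = V + ‖a i‖ ^ 2 := by rw [hV]; ring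
    rw [hV']
    constructor
    · calc ∑ A ∈ s.powerset, (‖(c + sgnSum s A a) + a i‖ ^ 2 + ‖(c + sgnSum s A a) - a i‖ ^ 2)
          = ∑ A ∈ s.powerset, (2 * ‖c + sgnSum s A a‖ ^ 2 + 2 * ‖a i‖ ^ 2 * 1) := by
            refine Finset.sum_congr rfl (fun A _ => ?_)
            rw [par_two, mul_one]
        _ = 2 * (2 ^ s.card * V) + 2 * ‖a i‖ ^ 2 * 2 ^ s.card := by
            rw [Finset.sum_add_distrib, ← Finset.mul_sum, ← Finset.mul_sum, ih2, hpc]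
        _ = _ := by ring
    · calc ∑ A ∈ s.powerset, (‖(c + sgnSum s A a) + a i‖ ^ 4 + ‖(c + sgnSum s A a) - a i‖ ^ 4)
          ≤ ∑ A ∈ s.powerset, (2 * ‖c + sgnSum s A a‖ ^ 4 +
              12 * ‖a i‖ ^ 2 * ‖c + sgnSum s A a‖ ^ 2 + 2 * ‖a i‖ ^ 4 * 1) := by
            refine Finset.sum_le_sum (fun A _ => ?_)
            have := par_four (c + sgnSum s A a) (a i)
            linarith
        _ = 2 * ∑ A ∈ s.powerset, ‖c + sgnSum s A a‖ ^ 4 + 12 * ‖a i‖ ^ 2 * (2 ^ s.card * V)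
              + 2 * ‖a i‖ ^ 4 * 2 ^ s.card := by
            rw [Finset.sum_add_distrib, Finset.sum_add_distrib, ← Finset.mul_sum, ← Finset.mul_sum,
              ← Finset.mul_sum, ih2, hpc]
        _ ≤ 2 * (3 * 2 ^ s.card * V ^ 2) + 12 * ‖a i‖ ^ 2 * (2 ^ s.card * V)
              + 6 * ‖a i‖ ^ 4 * 2 ^ s.card := by
            have : 0 ≤ ‖a i‖ ^ 4 * 2 ^ s.card := by positivity
            linarith
        _ = _ := by ring

/-- Lower Khinchine inequality for small exponents. -/
lemma khin_lower (s : Finset ℕ) (a : ℕ → ℂ) (c : ℂ) {q : ℝ} (hq0 : 0 < q) (hq1 : q ≤ 1)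
    {V0 : ℝ} (hV0 : 0 < V0) (hV : V0 ≤ ∑ j ∈ s, ‖a j‖ ^ 2) :
    2 ^ s.card * (V0 ^ (q / 2) / 12) ≤ ∑ A ∈ s.powerset, ‖c + sgnSum s A a‖ ^ q := by
  obtain ⟨h2, h4⟩ := khin_moments s a c
  set V := ‖c‖ ^ 2 + ∑ j ∈ s, ‖a j‖ ^ 2 with hVdef
  have hVV : V0 ≤ V := by rw [hVdef]; nlinarith [sq_nonneg ‖c‖]
  have hVp : 0 < V := hV0.trans_le hVV
  set B : ℝ := (6 * V) ^ (1 - q / 2) with hB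
  have hB0 : 0 < B := by positivity
  have hpt : ∀ x : ℝ, 0 ≤ x → x ^ 2 ≤ B * x ^ q + x ^ 4 / (6 * V) := by
    intro x hx
    rcases le_total (x ^ 2) (6 * V) with h | h
    · rcases hx.eq_or_lt with h0 | h0
      · rw [← h0, Real.zero_rpow hq0.ne']; simp
      · have h5 : x ^ (2 - q) ≤ B := by
          have : x ^ (2 - q) = (x ^ 2) ^ (1 - q / 2) := by
            rw [← Real.rpow_two, ← Real.rpow_mul hx]; congr 1; ring
          rw [this]
          exact Real.rpow_le_rpow (by positivity) h (by linarith)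
        have h6 : x ^ 2 = x ^ (2 - q) * x ^ q := by
          rw [← Real.rpow_add h0, ← Real.rpow_two]; congr 1; ring
        have h7 : x ^ 2 ≤ B * x ^ q := by
          rw [h6]; gcongr
        have h8 : 0 ≤ x ^ 4 / (6 * V) := by positivity
        linarith
    · have h5 : x ^ 2 ≤ x ^ 4 / (6 * V) := by
        rw [le_div_iff₀ (by positivity)]
        nlinarith [sq_nonneg x]
      have h6 : 0 ≤ B * x ^ q := by positivity
      linarith
  have hsum : 2 ^ s.card * V ≤ B * ∑ A ∈ s.powerset, ‖c + sgnSum s A a‖ ^ q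
      + (∑ A ∈ s.powerset, ‖c + sgnSum s A a‖ ^ 4) / (6 * V) := by
    rw [← h2, Finset.mul_sum, Finset.sum_div, ← Finset.sum_add_distrib]
    exact Finset.sum_le_sum (fun A _ => hpt _ (norm_nonneg _))
  have h9 : (∑ A ∈ s.powerset, ‖c + sgnSum s A a‖ ^ 4) / (6 * V) ≤ 2 ^ s.card * V / 2 := by
    rw [div_le_iff₀ (by positivity)]
    refine h4.trans (le_of_eq ?_)
    ring
  have h10 : 2 ^ s.card * V / 2 ≤ B * ∑ A ∈ s.powerset, ‖c + sgnSum s A a‖ ^ q := by linarith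
  have h11 : B * (6 * V) ^ (q / 2) = 6 * V := by
    rw [hB, ← Real.rpow_add (by positivity)]; simp
  have h12 : V0 ^ (q / 2) ≤ (6 * V) ^ (q / 2) :=
    Real.rpow_le_rpow hV0.le (by linarith) (by positivity)
  have h13 : B * (2 ^ s.card * ((6 * V) ^ (q / 2) / 12)) = 2 ^ s.card * V / 2 := by
    calc B * (2 ^ s.card * ((6 * V) ^ (q / 2) / 12))
        = 2 ^ s.card * (B * (6 * V) ^ (q / 2)) / 12 := by ring
      _ = _ := by rw [h11]; ring
  have h14 : B * (2 ^ s.card * ((6 * V) ^ (q / 2) / 12)) ≤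
      B * ∑ A ∈ s.powerset, ‖c + sgnSum s A a‖ ^ q := by rw [h13]; exact h10
  refine le_trans ?_ (le_of_mul_le_mul_left h14 hB0)
  gcongr

/-- Modification of signs on a finite set. -/
def modSign (e : ℕ → Bool) (s A : Finset ℕ) : ℕ → Bool :=
  fun j => if j ∈ s then decide (j ∉ A) else e j

lemma ser_modSign (e : ℕ → Bool) (s A : Finset ℕ) {z : ℂ} (hz : ‖z‖ < 1) :
    ser (modSign e s A) z =
      (∑' j, if j ∈ s then 0 else sgn (e j) * blk j z) + sgnSum s A (fun j => blk j z) := by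
  have hsb := summable_bound (norm_nonneg z) hz
  have hS1 : Summable (fun j => if j ∈ s then 0 else sgn (e j) * blk j z) := by
    refine Summable.of_norm_bounded hsb (fun j => ?_)
    split_ifs
    · rw [norm_zero]; exact (norm_nonneg _).trans (norm_blk_le hz le_rfl j)
    · exact norm_term_le hz le_rfl _ j
  have hS2 : Summable (fun j => if j ∈ s then (if j ∈ A then (-1 : ℂ) else 1) * blk j z else 0) :=
    summable_of_ne_finset_zero (s := s) (fun j hj => by simp [hj])
  have h2 : sgnSum s A (fun j => blk j z) =
      ∑' j, if j ∈ s then (if j ∈ A then (-1 : ℂ) else 1) * blk j z else 0 := by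
    rw [tsum_eq_sum (s := s) (fun j hj => by simp [hj])]
    exact Finset.sum_congr rfl (fun j hj => by simp [hj])
  rw [h2, ← hS1.tsum_add hS2, ser]
  congr 1
  ext j
  by_cases hj : j ∈ s <;> by_cases hA : j ∈ A <;> simp [modSign, hj, hA, sgn]

lemma exists_bad : ∃ e : ℕ → Bool, ∀ q : ℝ, 0 < q → ∀ C : ℝ, ∃ r ∈ Set.Ioo (0 : ℝ) 1,
    C < circMeanR q (fun z => (ser e z).im) r := by
  by_contra hcon
  push Not at hcon
  set F : ℕ × ℕ → Set (ℕ → Bool) := fun k => {e | ∀ r ∈ Ioo (0 : ℝ) 1,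
    circMeanR (1 / ((k.1 : ℝ) + 2)) (fun z => (ser e z).im) r ≤ k.2} with hF
  have hclosed : ∀ k, IsClosed (F k) := by
    intro k
    have : F k = ⋂ r ∈ Ioo (0 : ℝ) 1, {e | circMeanR (1 / ((k.1 : ℝ) + 2))
        (fun z => (ser e z).im) r ≤ k.2} := by
      ext e; simp [hF]
    rw [this]
    refine isClosed_biInter (fun r hr => ?_)
    exact isClosed_le (continuous_mean (by positivity) hr) continuous_const
  have hcover : ⋃ k, F k = univ := by
    rw [eq_univ_iff_forall]
    intro e
    obtain ⟨q, hq, C, hC⟩ := hcon e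
    obtain ⟨n, hn⟩ := exists_nat_one_div_lt hq
    obtain ⟨m, hm⟩ := exists_nat_ge (1 + C)
    refine mem_iUnion.2 ⟨(n, m), fun r hr => ?_⟩
    have h1 : 1 / ((n : ℝ) + 2) ≤ q := by
      refine le_trans ?_ hn.le
      gcongr; norm_num
    have := circMeanR_mono_exp (by positivity) h1 (cont_im (diff_ser e)) hr
    have := hC r hr
    simp only at *
    linarith
  obtain ⟨⟨n, m⟩, e, he⟩ := nonempty_interior_of_iUnion_of_closed hclosed hcover
  set q : ℝ := 1 / ((n : ℝ) + 2) with hq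
  have hq0 : 0 < q := by positivity
  have hq1 : q < 1 := by
    rw [hq, div_lt_one (by positivity)]
    have : (0 : ℝ) ≤ n := by positivity
    linarith
  obtain ⟨I, u, hu, hsub⟩ := isOpen_pi_iff.1 isOpen_interior e he
  have hin : ∀ e' : ℕ → Bool, (∀ j ∈ I, e' j = e j) → ∀ r ∈ Ioo (0 : ℝ) 1,
      circMeanR q (fun z => (ser e' z).im) r ≤ m := by
    intro e' h
    have : e' ∈ F (n, m) := interior_subset (hsub (fun j hj => by
      rw [h j hj]; exact (hu j hj).2))
    exact this
  obtain ⟨Cq, hCq⟩ := ser_re_bdd hq0 hq1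
  -- choose the block
  obtain ⟨L, hL⟩ := exists_nat_gt (16 * (|12 * (m + Cq)| + 1) ^ (2 / q))
  have hL0 : (0 : ℝ) < L := lt_of_le_of_lt (by positivity) hL
  set K := I.sup id + 1 with hK
  set s := Finset.Ico K (K + L) with hs
  have hscard : s.card = L := by simp [hs]
  have hsI : ∀ j ∈ I, j ∉ s := by
    intro j hj hjs
    have h1 : j ≤ I.sup id := Finset.le_sup (f := id) hj
    have h2 := (Finset.mem_Ico.1 hjs).1
    omega
  set M : ℕ := 2 ^ (K + L) with hM
  have hM0 : M ≠ 0 := by positivity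
  set r : ℝ := (1 / 2) ^ (1 / (M : ℝ)) with hr
  have hrM : r ^ M = 1 / 2 := by
    rw [hr, one_div (M : ℝ)]
    exact Real.rpow_inv_natCast_pow (by norm_num) hM0
  have hr0 : 0 < r := by positivity
  have hr1 : r < 1 := Real.rpow_lt_one (by norm_num) (by norm_num) (by positivity)
  have hrr : r ∈ Ioo (0 : ℝ) 1 := ⟨hr0, hr1⟩
  have hci : ∀ e', CircleIntegrable (fun z => ‖ser e' z‖ ^ q) 0 r := fun e' =>
    ci_of_cont hr0 hr1 ((cont_norm_rpow hq0).comp_continuousOn (diff_ser e').continuousOn)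
  have hupper : ∀ A ∈ s.powerset,
      Real.circleAverage (fun z => ‖ser (modSign e s A) z‖ ^ q) 0 r ≤ m + Cq := by
    intro A _
    have h1 := hin (modSign e s A) (fun j hj => by simp [modSign, hsI j hj]) r hrr
    have h2 := hCq (modSign e s A) r hrr
    rw [circMeanR_eq] at h1 h2
    refine le_trans ?_ (add_le_add h1 h2)
    have i1 := ci_abs_rpow hq0 (cont_im (diff_ser (modSign e s A))) hrr
    have i2 := ci_abs_rpow hq0 (cont_re (diff_ser (modSign e s A))) hrr
    rw [← Real.circleAverage_fun_add i1 i2]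
    refine Real.circleAverage_mono (hci _) (i1.add i2) ?_
    intro z _
    calc ‖ser (modSign e s A) z‖ ^ q
        ≤ (|(ser (modSign e s A) z).im| + |(ser (modSign e s A) z).re|) ^ q := by
          refine Real.rpow_le_rpow (norm_nonneg _) ?_ hq0.le
          rw [add_comm]; exact Complex.norm_le_abs_re_add_abs_im _
      _ ≤ _ := Real.rpow_add_le_add_rpow (abs_nonneg _) (abs_nonneg _) hq0.le hq1.le
  have hlower : 2 ^ s.card * (((L : ℝ) / 16) ^ (q / 2) / 12) ≤
      ∑ A ∈ s.powerset, Real.circleAverage (fun z => ‖ser (modSign e s A) z‖ ^ q) 0 r := by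
    rw [← Real.circleAverage_fun_sum (fun A _ => hci _),
      ← Real.circleAverage_const (2 ^ s.card * (((L : ℝ) / 16) ^ (q / 2) / 12)) (0 : ℂ) r]
    refine Real.circleAverage_mono (circleIntegrable_const _ _ _)
      (CircleIntegrable.fun_sum _ (fun A _ => hci _)) ?_
    intro z hz
    rw [abs_of_pos hr0] at hz
    have hz' : ‖z‖ = r := by simpa using hz
    have hz1 : ‖z‖ < 1 := by rw [hz']; exact hr1
    have := khin_lower s (fun j => blk j z) (∑' j, if j ∈ s then 0 else sgn (e j) * blk j z)
      hq0 hq1.le (V0 := (L : ℝ) / 16) (by positivity) ?_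
    · refine this.trans (le_of_eq (Finset.sum_congr rfl (fun A _ => ?_)))
      rw [ser_modSign e s A hz1]
    · have hb : ∀ j ∈ s, (1 : ℝ) / 16 ≤ ‖blk j z‖ ^ 2 := by
        intro j hj
        have h1 := le_norm_blk hz1 j
        have h2 : (1 : ℝ) / 2 ≤ ‖z‖ ^ (2 ^ j) := by
          rw [hz', ← hrM]
          refine pow_le_pow_of_le_one hr0.le hr1.le ?_
          exact Nat.pow_le_pow_right (by norm_num) (Finset.mem_Ico.1 hj).2.le
        nlinarith
      have := Finset.card_nsmul_le_sum s _ _ hb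
      rw [hscard, nsmul_eq_mul] at this
      linarith
  have hfin : (2 : ℝ) ^ s.card * (((L : ℝ) / 16) ^ (q / 2) / 12) ≤ 2 ^ s.card * (m + Cq) := by
    refine hlower.trans ((Finset.sum_le_sum hupper).trans (le_of_eq ?_))
    simp [Finset.card_powerset]
    ring
  have hfin2 := le_of_mul_le_mul_left hfin (by positivity)
  have h16 : |12 * (m + Cq)| + 1 ≤ ((L : ℝ) / 16) ^ (q / 2) := by
    have h1 : (|12 * (m + Cq)| + 1) ^ (2 / q) ≤ (L : ℝ) / 16 := by
      rw [le_div_iff₀ (by norm_num)]; linarith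
    have h2 := Real.rpow_le_rpow (by positivity) h1 (show 0 ≤ q / 2 by positivity)
    rw [← Real.rpow_mul (by positivity), div_mul_div_cancel₀ hq0.ne', div_self two_ne_zero,
      Real.rpow_one] at h2
    exact h2
  have := le_abs_self (12 * (m + Cq))
  linarith

/-- Remark 3.8: for fixed `0 < p < 1`, the set of `u ∈ h^p` whose normalized harmonic
conjugate `ũ = Im f` belongs to no `h^q` with `q > 0` is a `G_δ` dense subset of
`(h^p, δ_p)`. -/
theorem conjugate_in_no_hq_generic_hp (p : ℝ) (hp0 : 0 < p) (hp1 : p < 1) :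
    @IsGδ (HarmVp p) (ballTopology (harmDistP p))
      {f : HarmVp p | ∀ q : ℝ, 0 < q → ∀ C : ℝ, ∃ r ∈ Set.Ioo (0 : ℝ) 1,
        C < circMeanR q (fun z => (f.1 z).im) r} ∧
    @Dense (HarmVp p) (ballTopology (harmDistP p))
      {f : HarmVp p | ∀ q : ℝ, 0 < q → ∀ C : ℝ, ∃ r ∈ Set.Ioo (0 : ℝ) 1,
        C < circMeanR q (fun z => (f.1 z).im) r} := by
  refine ⟨gdelta_part hp0 hp1, ?_⟩
  obtain ⟨e, he⟩ := exists_bad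
  obtain ⟨C, hC⟩ := ser_re_bdd hp0 hp1
  exact generic_of_exists hp0 hp1
    ⟨ser e, diff_ser e, by simp [ser_zero], C, hC e⟩ he

end
end

section
/- Let (f_m)_{m≥1} and f be holomorphic functions on the open unit disc 𝔻 with Im f_m(0) = 0 for all m and Im f(0) = 0. If Re f_m → Re f uniformly on every compact subset of 𝔻, then f_m → f uniformly on every compact subset of 𝔻 (in particular Im f_m → Im f uniformly on compact subsets of 𝔻). -/
open Complex Metric

/-- The Claim in Proposition 3.1: if holomorphic functions `f_m` on the unit disc, all
normalized by `Im f_m(0) = 0` (as is `f`), have real parts converging uniformly on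
compacta of `𝔻` to `Re f`, then `f_m → f` uniformly on compacta of `𝔻` (in particular
the normalized harmonic conjugates `Im f_m` converge uniformly on compacta to `Im f`). -/
theorem conjugates_converge_uniformly_on_compacts (f : ℕ → ℂ → ℂ) (g : ℂ → ℂ)
    (hf : ∀ m : ℕ, DifferentiableOn ℂ (f m) (Metric.ball (0 : ℂ) 1))
    (hg : DifferentiableOn ℂ g (Metric.ball (0 : ℂ) 1))
    (hf0 : ∀ m : ℕ, (f m 0).im = 0) (hg0 : (g 0).im = 0)
    (hre : ∀ K ⊆ Metric.ball (0 : ℂ) 1, IsCompact K →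
      TendstoUniformlyOn (fun m z => (f m z).re) (fun z => (g z).re) Filter.atTop K) :
    ∀ K ⊆ Metric.ball (0 : ℂ) 1, IsCompact K →
      TendstoUniformlyOn (fun m z => f m z) g Filter.atTop K := by
  intro K hK hKc
  obtain ⟨r, ⟨hr0, hr1⟩, hr⟩ := exists_pos_lt_subset_ball one_pos hKc.isClosed hK
  obtain ⟨R, hrR, hR1⟩ := exists_between hr1
  have hR0 : 0 < R := hr0.trans hrR
  have hsub : closedBall (0 : ℂ) R ⊆ ball 0 1 := closedBall_subset_ball hR1
  have hbs : ball (0 : ℂ) R ⊆ ball 0 1 := ball_subset_ball hR1.le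
  have h := hre _ hsub (isCompact_closedBall 0 R)
  rw [Metric.tendstoUniformlyOn_iff] at h ⊢
  intro ε hε
  have hd : 0 < R - r := sub_pos.2 hrR
  have hδ : 0 < ε * (R - r) / 8 := by positivity
  filter_upwards [h _ hδ] with m hm z hz
  generalize hδe : ε * (R - r) / 8 = δ at hm hδ
  have hzr : ‖z‖ < r := mem_ball_zero_iff.1 (hr hz)
  have key : ∀ w ∈ closedBall (0 : ℂ) R, |(g w - f m w).re| ≤ δ := by
    intro w hw
    have := (hm w hw).le
    rwa [Real.dist_eq, ← sub_re] at this
  have h0 : ‖g 0 - f m 0‖ ≤ δ := by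
    have him : (g 0 - f m 0).im = 0 := by simp [hf0, hg0]
    rw [← abs_re_eq_norm.2 him]
    exact key 0 (by simp [hR0.le])
  have hb := borelCaratheodory (f := fun w => g w - f m w) (M := δ) (R := R) (z := z) hδ
    ((hg.mono hbs).sub ((hf m).mono hbs))
    (fun w hw => (le_abs_self _).trans (key w (ball_subset_closedBall hw))) hR0
    (mem_ball_zero_iff.2 (hzr.trans hrR))
  rw [dist_eq_norm]
  refine hb.trans_lt ?_
  have hz0 := norm_nonneg z
  have hp : 0 < R - ‖z‖ := by linarith
  rw [← add_div, div_lt_iff₀ hp]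
  have h1 : ‖g 0 - f m 0‖ * (R + ‖z‖) ≤ δ * 2 :=
    mul_le_mul h0 (by linarith) (by linarith) hδ.le
  have h2 : δ * ‖z‖ ≤ δ * 1 := mul_le_mul_of_nonneg_left (by linarith) hδ.le
  have h3 : ε * (R - r) ≤ ε * (R - ‖z‖) := mul_le_mul_of_nonneg_left (by linarith) hε.le
  have h4 : 0 < ε * (R - r) := mul_pos hε hd
  linarith
end
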